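/- arXiv:1410.2499 — 2 statements merged into one kernel-verified Lean document; each statement's English description precedes it below -/
import Mathlib

section
/- For any step of the nonsmooth Krenk–Høgsberg generalized-α scheme in augmented Newmark form with filter parameters ν ≠ 0 and η, the variation of the algorithmic energy satisfies H(q_{k+1},v_{k+1},a_{k+1},z_{k+1}) − H(q_k,v_k,a_k,z_k) − W_ext − W_damp = U_{k+1/2}ᵀ P_{k+1} − (1/2)h²(γ − 1/2)(2β − γ)‖a_{k+1}−a_k‖²_M − (γ − 1/2 − η)‖q_{k+1}−q_k‖²_K − (η/ν)(ν − γ + 1/2)‖z_{k+1}−z_k‖²_K. -/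
open Matrix

theorem symm_dot {n : ℕ} {A : Matrix (Fin n) (Fin n) ℝ} (hA : Aᵀ = A) (x y : Fin n → ℝ) :
    x ⬝ᵥ A.mulVec y = y ⬝ᵥ A.mulVec x := by
  rw [dotProduct_mulVec, ← mulVec_transpose, hA, dotProduct_comm]

/-- Inertial contribution. -/
theorem mass_part {n : ℕ} {M : Matrix (Fin n) (Fin n) ℝ} (hM : Mᵀ = M) (h γ β : ℝ)
    (v v1 a a1 w D : Fin n → ℝ)
    (hv : v1 = v + (h * (1 - γ)) • a + (h * γ) • a1 + w)
    (hD : D = h • v + (h ^ 2 * (1/2 - β)) • a + (h ^ 2 * β) • a1 + (h / 2) • w) :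
    1/2 * (v1 ⬝ᵥ M.mulVec v1) - 1/2 * (v ⬝ᵥ M.mulVec v)
      + h ^ 2 / 4 * (2 * β - γ) * (a1 ⬝ᵥ M.mulVec a1)
      - h ^ 2 / 4 * (2 * β - γ) * (a ⬝ᵥ M.mulVec a)
      - (γ * (D ⬝ᵥ M.mulVec a1) + (1 - γ) * (D ⬝ᵥ M.mulVec a))
    = 1/2 * (v ⬝ᵥ M.mulVec w + v1 ⬝ᵥ M.mulVec w)
      - 1/2 * h ^ 2 * (γ - 1/2) * (2 * β - γ) * ((a1 - a) ⬝ᵥ M.mulVec (a1 - a)) := by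
  subst hv hD
  simp only [mulVec_add, mulVec_sub, mulVec_smul, add_dotProduct, sub_dotProduct, dotProduct_add,
    dotProduct_sub, smul_dotProduct, dotProduct_smul, smul_eq_mul]
  rw [symm_dot hM a v, symm_dot hM a1 v, symm_dot hM w v, symm_dot hM a1 a, symm_dot hM w a,
    symm_dot hM w a1]
  ring

/-- Stiffness contribution. -/
theorem stiff_part {n : ℕ} {K : Matrix (Fin n) (Fin n) ℝ} (hK : Kᵀ = K) (γ : ℝ)
    (q q1 : Fin n → ℝ) :
    1/2 * (q1 ⬝ᵥ K.mulVec q1) - 1/2 * (q ⬝ᵥ K.mulVec q)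
      - (γ * ((q1 - q) ⬝ᵥ K.mulVec q1) + (1 - γ) * ((q1 - q) ⬝ᵥ K.mulVec q))
    = - (γ - 1/2) * ((q1 - q) ⬝ᵥ K.mulVec (q1 - q)) := by
  simp only [mulVec_sub, sub_dotProduct, dotProduct_sub]
  rw [symm_dot hK q1 q]
  ring

/-- Filter contribution. -/
theorem filter_part {n : ℕ} {K : Matrix (Fin n) (Fin n) ℝ} (hK : Kᵀ = K) (γ η ν : ℝ)
    (hν : ν ≠ 0) (z z1 D : Fin n → ℝ)
    (hz : ν • (z1 - z) + (1/2 : ℝ) • (z1 + z) = ν • D) :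
    η / (2 * ν ^ 2) * (ν - (γ - 1/2)) * (z1 ⬝ᵥ K.mulVec z1)
      - η / (2 * ν ^ 2) * (ν - (γ - 1/2)) * (z ⬝ᵥ K.mulVec z)
      + η / ν * (γ * (D ⬝ᵥ K.mulVec z1) + (1 - γ) * (D ⬝ᵥ K.mulVec z))
    = η * (D ⬝ᵥ K.mulVec D)
      - (η / ν) * (ν - γ + 1/2) * ((z1 - z) ⬝ᵥ K.mulVec (z1 - z)) := by
  have hD : D = (z1 - z) + (1 / (2 * ν)) • (z1 + z) := by
    have h2 : D = ν⁻¹ • (ν • D) := by rw [smul_smul, inv_mul_cancel₀ hν, one_smul]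
    rw [h2, ← hz, smul_add, smul_smul, smul_smul, inv_mul_cancel₀ hν, one_smul]
    congr 2
    field_simp
  subst hD
  simp only [mulVec_add, mulVec_sub, mulVec_smul, add_dotProduct, sub_dotProduct, dotProduct_add,
    dotProduct_sub, smul_dotProduct, dotProduct_smul, smul_eq_mul]
  rw [symm_dot hK z1 z]
  field_simp
  ring

/-- Variation of the algorithmic energy over one step of the nonsmooth
Krenk–Høgsberg generalized-α scheme in augmented Newmark form. -/
theorem nonsmooth_KH_generalized_alpha_algorithmic_energy
    (n m : ℕ) (hn : 1 ≤ n) (hm : 1 ≤ m)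
    (h γ β η ν : ℝ) (hh : 0 < h) (hν : ν ≠ 0)
    (M K C : Matrix (Fin n) (Fin n) ℝ) (G : Matrix (Fin n) (Fin m) ℝ)
    (hM : M.PosDef) (hK : K.PosSemidef)
    (qk qk1 vk vk1 ak ak1 Fk Fk1 zk zk1 w : Fin n → ℝ)
    (P : Fin m → ℝ)
    (hbalk : M.mulVec ak + K.mulVec qk + C.mulVec vk = Fk + (η / ν) • K.mulVec zk)
    (hbalk1 : M.mulVec ak1 + K.mulVec qk1 + C.mulVec vk1 = Fk1 + (η / ν) • K.mulVec zk1)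
    (hw : M.mulVec w = G.mulVec P)
    (hv : vk1 = vk + (h * (1 - γ)) • ak + (h * γ) • ak1 + w)
    (hq : qk1 = qk + h • vk + (h ^ 2 * (1/2 - β)) • ak + (h ^ 2 * β) • ak1
        + (h / 2) • w)
    (hz : ν • (zk1 - zk) + (1/2 : ℝ) • (zk1 + zk) = ν • (qk1 - qk)) :
    (1/2 * (vk1 ⬝ᵥ M.mulVec vk1) + 1/2 * (qk1 ⬝ᵥ K.mulVec qk1)
        + h ^ 2 / 4 * (2 * β - γ) * (ak1 ⬝ᵥ M.mulVec ak1)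
        + η / (2 * ν ^ 2) * (ν - (γ - 1/2)) * (zk1 ⬝ᵥ K.mulVec zk1))
      - (1/2 * (vk ⬝ᵥ M.mulVec vk) + 1/2 * (qk ⬝ᵥ K.mulVec qk)
        + h ^ 2 / 4 * (2 * β - γ) * (ak ⬝ᵥ M.mulVec ak)
        + η / (2 * ν ^ 2) * (ν - (γ - 1/2)) * (zk ⬝ᵥ K.mulVec zk))
      - (qk1 - qk) ⬝ᵥ (γ • Fk1 + (1 - γ) • Fk)
      - (-((qk1 - qk) ⬝ᵥ C.mulVec (γ • vk1 + (1 - γ) • vk)))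
    = ((1/2 : ℝ) • (Gᵀ.mulVec vk + Gᵀ.mulVec vk1)) ⬝ᵥ P
      - 1/2 * h ^ 2 * (γ - 1/2) * (2 * β - γ) * ((ak1 - ak) ⬝ᵥ M.mulVec (ak1 - ak))
      - (γ - 1/2 - η) * ((qk1 - qk) ⬝ᵥ K.mulVec (qk1 - qk))
      - (η / ν) * (ν - γ + 1/2) * ((zk1 - zk) ⬝ᵥ K.mulVec (zk1 - zk)) := by
  have hMt : Mᵀ = M := by simpa [IsHermitian, conjTranspose_eq_transpose_of_trivial] using hM.isHermitian
  have hKt : Kᵀ = K := by simpa [IsHermitian, conjTranspose_eq_transpose_of_trivial] using hK.isHermitian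
  have h1 := mass_part hMt h γ β vk vk1 ak ak1 w (qk1 - qk) hv (by rw [hq]; abel)
  have h2 := stiff_part hKt γ qk qk1
  have h3 := filter_part hKt γ η ν hν zk zk1 (qk1 - qk) hz
  have hF := congrArg (fun x => (qk1 - qk) ⬝ᵥ x) hbalk
  have hF1 := congrArg (fun x => (qk1 - qk) ⬝ᵥ x) hbalk1
  have hG : ∀ x : Fin n → ℝ, Gᵀ.mulVec x ⬝ᵥ P = x ⬝ᵥ M.mulVec w := by
    intro x
    rw [hw, mulVec_transpose, ← dotProduct_mulVec]
  rw [smul_dotProduct, add_dotProduct, hG, hG]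
  generalize qk1 - qk = D at *
  simp only [dotProduct_add, dotProduct_smul, smul_eq_mul, mulVec_add, mulVec_smul] at hF hF1 ⊢
  linear_combination h1 + h2 + h3 + γ * hF1 + (1 - γ) * hF
end

section
/- If the parameters satisfy 2β ≥ γ ≥ 1/2 and 0 ≤ η ≤ γ − 1/2 ≤ ν, and the local velocities and impulse satisfy the discrete contact conditions, then any step of the nonsmooth Krenk–Høgsberg generalized-α scheme in augmented Newmark form is stable in the sense that H(q_{k+1},v_{k+1},a_{k+1},z_{k+1}) − H(q_k,v_k,a_k,z_k) − W_ext − W_damp ≤ 0. -/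
open Matrix

theorem khDotSymm {n : ℕ} {A : Matrix (Fin n) (Fin n) ℝ} (hA : A.IsHermitian)
    (x y : Fin n → ℝ) : x ⬝ᵥ A.mulVec y = y ⬝ᵥ A.mulVec x := by
  have ht : Aᵀ = A := by
    have h1 := hA.eq
    rwa [Matrix.conjTranspose_eq_transpose_of_trivial] at h1
  rw [Matrix.dotProduct_mulVec, ← Matrix.mulVec_transpose, ht, dotProduct_comm]

theorem khMassPart {n : ℕ} {M : Matrix (Fin n) (Fin n) ℝ} (hM : M.IsHermitian)
    (h γ β : ℝ) (v a b w : Fin n → ℝ) :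
    1/2 * ((v + (h * (1 - γ)) • a + (h * γ) • b + w) ⬝ᵥ
        M.mulVec (v + (h * (1 - γ)) • a + (h * γ) • b + w))
      - 1/2 * (v ⬝ᵥ M.mulVec v)
      + h ^ 2 / 4 * (2 * β - γ) * (b ⬝ᵥ M.mulVec b)
      - h ^ 2 / 4 * (2 * β - γ) * (a ⬝ᵥ M.mulVec a)
      - (h • v + (h ^ 2 * (1/2 - β)) • a + (h ^ 2 * β) • b + (h / 2) • w) ⬝ᵥ
        M.mulVec (γ • b + (1 - γ) • a)
    = 1/2 * ((v + (v + (h * (1 - γ)) • a + (h * γ) • b + w)) ⬝ᵥ M.mulVec w)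
      - h ^ 2 * (β - γ / 2) * (γ - 1/2) * ((b - a) ⬝ᵥ M.mulVec (b - a)) := by
  simp only [Matrix.mulVec_add, Matrix.mulVec_sub, Matrix.mulVec_smul, add_dotProduct,
    sub_dotProduct, dotProduct_add, dotProduct_sub, smul_dotProduct, dotProduct_smul, smul_eq_mul]
  rw [khDotSymm hM a v, khDotSymm hM b v, khDotSymm hM w v, khDotSymm hM b a, khDotSymm hM w a,
    khDotSymm hM w b]
  ring

theorem khStiffPart {n : ℕ} {K : Matrix (Fin n) (Fin n) ℝ} (hK : K.IsHermitian)
    (γ η ν : ℝ) (hν : 0 < ν) (q d x y : Fin n → ℝ)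
    (hd : d = (y - x) + (1 / (2 * ν)) • (y + x)) :
    1/2 * ((q + d) ⬝ᵥ K.mulVec (q + d)) - 1/2 * (q ⬝ᵥ K.mulVec q)
      + η / (2 * ν ^ 2) * (ν - (γ - 1/2)) * (y ⬝ᵥ K.mulVec y)
      - η / (2 * ν ^ 2) * (ν - (γ - 1/2)) * (x ⬝ᵥ K.mulVec x)
      - d ⬝ᵥ K.mulVec (γ • (q + d) + (1 - γ) • q)
      + η / ν * (d ⬝ᵥ K.mulVec (γ • y + (1 - γ) • x))
    = - (γ - 1/2 - η) * (d ⬝ᵥ K.mulVec d)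
      - η * (1 - (γ - 1/2) / ν) * ((y - x) ⬝ᵥ K.mulVec (y - x)) := by
  subst hd
  simp only [Matrix.mulVec_add, Matrix.mulVec_sub, Matrix.mulVec_smul, add_dotProduct,
    sub_dotProduct, dotProduct_add, dotProduct_sub, smul_dotProduct, dotProduct_smul, smul_eq_mul]
  rw [khDotSymm hK y q, khDotSymm hK x q, khDotSymm hK y x]
  field_simp
  ring

theorem khContactPart {n m : ℕ} (G : Matrix (Fin n) (Fin m) ℝ) (v v1 : Fin n → ℝ)
    (P e : Fin m → ℝ) (I₁ : Finset (Fin m))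
    (he : ∀ α, 0 ≤ e α ∧ e α ≤ 1)
    (hPout : ∀ α ∉ I₁, P α = 0)
    (hc : ∀ α ∈ I₁, Gᵀ.mulVec v α ≤ 0
        ∧ 0 ≤ Gᵀ.mulVec v1 α + e α * Gᵀ.mulVec v α
        ∧ 0 ≤ P α
        ∧ (Gᵀ.mulVec v1 α + e α * Gᵀ.mulVec v α) * P α = 0) :
    (v + v1) ⬝ᵥ G.mulVec P ≤ 0 := by
  rw [Matrix.dotProduct_mulVec, ← Matrix.mulVec_transpose, Matrix.mulVec_add]
  apply Finset.sum_nonpos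
  intro α _
  by_cases hα : α ∈ I₁
  · obtain ⟨h1, _, h3, h4⟩ := hc α hα
    have h5 := mul_nonneg (mul_nonneg (sub_nonneg.2 (he α).2) (neg_nonneg.2 h1)) h3
    simp only [Pi.add_apply]
    nlinarith
  · simp [hPout α hα]

/-- Stability of the nonsmooth Krenk–Høgsberg generalized-α scheme:
under `2β ≥ γ ≥ 1/2`, `0 ≤ η ≤ γ − 1/2 ≤ ν` and the discrete contact
conditions, the algorithmic energy decreases up to the external and damping
works. -/
theorem nonsmooth_KH_generalized_alpha_stable
    (n m : ℕ) (hn : 1 ≤ n) (hm : 1 ≤ m)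
    (h γ β η ν : ℝ) (hh : 0 < h) (hν : 0 < ν)
    (M K C : Matrix (Fin n) (Fin n) ℝ) (G : Matrix (Fin n) (Fin m) ℝ)
    (hM : M.PosDef) (hK : K.PosSemidef)
    (qk qk1 vk vk1 ak ak1 Fk Fk1 zk zk1 w : Fin n → ℝ)
    (P : Fin m → ℝ)
    (hbalk : M.mulVec ak + K.mulVec qk + C.mulVec vk = Fk + (η / ν) • K.mulVec zk)
    (hbalk1 : M.mulVec ak1 + K.mulVec qk1 + C.mulVec vk1 = Fk1 + (η / ν) • K.mulVec zk1)
    (hw : M.mulVec w = G.mulVec P)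
    (hv : vk1 = vk + (h * (1 - γ)) • ak + (h * γ) • ak1 + w)
    (hq : qk1 = qk + h • vk + (h ^ 2 * (1/2 - β)) • ak + (h ^ 2 * β) • ak1
        + (h / 2) • w)
    (hz : ν • (zk1 - zk) + (1/2 : ℝ) • (zk1 + zk) = ν • (qk1 - qk))
    (e : Fin m → ℝ) (I₁ : Finset (Fin m))
    (he : ∀ α, 0 ≤ e α ∧ e α ≤ 1)
    (hPout : ∀ α ∉ I₁, P α = 0)
    (hc : ∀ α ∈ I₁, Gᵀ.mulVec vk α ≤ 0
        ∧ 0 ≤ Gᵀ.mulVec vk1 α + e α * Gᵀ.mulVec vk α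
        ∧ 0 ≤ P α
        ∧ (Gᵀ.mulVec vk1 α + e α * Gᵀ.mulVec vk α) * P α = 0)
    (hβ : γ ≤ 2 * β) (hγ : 1/2 ≤ γ)
    (hη0 : 0 ≤ η) (hηγ : η ≤ γ - 1/2) (hγν : γ - 1/2 ≤ ν) :
    (1/2 * (vk1 ⬝ᵥ M.mulVec vk1) + 1/2 * (qk1 ⬝ᵥ K.mulVec qk1)
        + h ^ 2 / 4 * (2 * β - γ) * (ak1 ⬝ᵥ M.mulVec ak1)
        + η / (2 * ν ^ 2) * (ν - (γ - 1/2)) * (zk1 ⬝ᵥ K.mulVec zk1))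
      - (1/2 * (vk ⬝ᵥ M.mulVec vk) + 1/2 * (qk ⬝ᵥ K.mulVec qk)
        + h ^ 2 / 4 * (2 * β - γ) * (ak ⬝ᵥ M.mulVec ak)
        + η / (2 * ν ^ 2) * (ν - (γ - 1/2)) * (zk ⬝ᵥ K.mulVec zk))
      - (qk1 - qk) ⬝ᵥ (γ • Fk1 + (1 - γ) • Fk)
      - (-((qk1 - qk) ⬝ᵥ C.mulVec (γ • vk1 + (1 - γ) • vk))) ≤ 0 := by
  obtain ⟨d, hd⟩ : ∃ d, d = qk1 - qk := ⟨_, rfl⟩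
  have hq1 : qk1 = qk + d := by rw [hd]; abel
  have hd1 : d = h • vk + (h ^ 2 * (1/2 - β)) • ak + (h ^ 2 * β) • ak1 + (h / 2) • w := by
    rw [hd, hq]; abel
  have hd2 : d = (zk1 - zk) + (1 / (2 * ν)) • (zk1 + zk) := by
    ext i
    have hi := congrFun hz i
    rw [← hd] at hi
    simp only [Pi.add_apply, Pi.smul_apply, Pi.sub_apply, smul_eq_mul] at hi ⊢
    field_simp
    linarith
  have hMp := khMassPart hM.isHermitian h γ β vk ak ak1 w
  rw [← hv, ← hd1, hw] at hMp
  have hKp := khStiffPart hK.isHermitian γ η ν hν qk d zk zk1 hd2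
  rw [← hq1] at hKp
  have hC := khContactPart G vk vk1 P e I₁ he hPout hc
  have pM : 0 ≤ (ak1 - ak) ⬝ᵥ M.mulVec (ak1 - ak) := by
    simpa using hM.posSemidef.dotProduct_mulVec_nonneg (ak1 - ak)
  have pK1 : 0 ≤ d ⬝ᵥ K.mulVec d := by
    simpa using hK.dotProduct_mulVec_nonneg d
  have pK2 : 0 ≤ (zk1 - zk) ⬝ᵥ K.mulVec (zk1 - zk) := by
    simpa using hK.dotProduct_mulVec_nonneg (zk1 - zk)
  have c1 : 0 ≤ h ^ 2 * (β - γ / 2) * (γ - 1/2) :=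
    mul_nonneg (mul_nonneg (sq_nonneg h) (by linarith)) (by linarith)
  have c2 : 0 ≤ γ - 1/2 - η := by linarith
  have c3 : 0 ≤ η * (1 - (γ - 1/2) / ν) :=
    mul_nonneg hη0 (sub_nonneg.2 ((div_le_one hν).2 hγν))
  have t1 := mul_nonneg c1 pM
  have t2 := mul_nonneg c2 pK1
  have t3 := mul_nonneg c3 pK2
  have hb0 := congrArg (fun u => d ⬝ᵥ u) hbalk
  have hb1 := congrArg (fun u => d ⬝ᵥ u) hbalk1
  have e0 : d ⬝ᵥ Fk = d ⬝ᵥ M.mulVec ak + d ⬝ᵥ K.mulVec qk + d ⬝ᵥ C.mulVec vk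
      - η / ν * (d ⬝ᵥ K.mulVec zk) := by
    simp only [dotProduct_add, dotProduct_smul, smul_eq_mul] at hb0
    linarith
  have e1 : d ⬝ᵥ Fk1 = d ⬝ᵥ M.mulVec ak1 + d ⬝ᵥ K.mulVec qk1 + d ⬝ᵥ C.mulVec vk1
      - η / ν * (d ⬝ᵥ K.mulVec zk1) := by
    simp only [dotProduct_add, dotProduct_smul, smul_eq_mul] at hb1
    linarith
  rw [← hd]
  have hF : d ⬝ᵥ (γ • Fk1 + (1 - γ) • Fk) = d ⬝ᵥ M.mulVec (γ • ak1 + (1 - γ) • ak)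
      + d ⬝ᵥ K.mulVec (γ • qk1 + (1 - γ) • qk) + d ⬝ᵥ C.mulVec (γ • vk1 + (1 - γ) • vk)
      - η / ν * (d ⬝ᵥ K.mulVec (γ • zk1 + (1 - γ) • zk)) := by
    simp only [Matrix.mulVec_add, Matrix.mulVec_smul, dotProduct_add, dotProduct_smul,
      smul_eq_mul]
    rw [e0, e1]
    ring
  rw [hF]
  linarith
end
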